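/- Local deflation with uniform cutoff α > 0: let K = Σ_{e=1}^N L_e^T·K_e·L_e with each K_e ∈ ℝ^{m×m} symmetric positive semidefinite, and M = Σ_{e=1}^N L_e^T·M_e·L_e with each M_e ∈ ℝ^{m×m} symmetric positive definite. For each e, let U_{e,2} ∈ ℝ^{m×r} (0 < r < m) satisfy U_{e,2}^T·M_e·U_{e,2} = I_r, set V_e = M_e·U_{e,2} and M̄_e = M_e + α·V_e·V_e^T, and let M̄ = Σ_{e=1}^N L_e^T·M̄_e·L_e. Then for every i = 1,…,n: λ_i(K, M̄) ≤ λ_i(K, M) ≤ (1+α)·λ_i(K, M̄); equivalently, 1 ≤ ω_i/ω̄_i ≤ √(1+α) wherever ω̄_i > 0. -/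

import Mathlib

open Matrix

/-- The eigenvalues of a symmetric real matrix listed in ascending order with multiplicity. -/
noncomputable def sortedEigs {n : ℕ} (M : Matrix (Fin n) (Fin n) ℝ) : Fin n → ℝ :=
  if h : M.IsHermitian then h.eigenvalues ∘ Tuple.sort h.eigenvalues else 0

-- The generalized eigenvalues `λ_1(A,B) ≤ … ≤ λ_n(A,B)`: the eigenvalues of
-- `B^{-1/2} A B^{-1/2}` in ascending order with multiplicity (`B` positive definite).
open Classical in
open scoped MatrixOrder in
noncomputable def genEigs {n : ℕ} (A B : Matrix (Fin n) (Fin n) ℝ) : Fin n → ℝ :=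
  if hB : B.PosDef then sortedEigs ((CFC.sqrt B)⁻¹ * A * (CFC.sqrt B)⁻¹) else 0

/-- The Boolean connectivity matrix `L_e` of an element whose local-to-global map is `σ`:
its rows are the standard basis vectors of `ℝ^n` selected by `σ`. -/
def elemL {ι : Type*} {n : ℕ} (σ : ι → Fin n) : Matrix ι (Fin n) ℝ :=
  Matrix.of fun i j => if σ i = j then 1 else 0

/-!
By the Courant-Fischer min-max principle, `λ_i(A, B)` only depends on the two quadratic forms, and
for `A ⪰ 0` it is antitone in `B`: if `B₁ ⪯ c B₂` then `λ_i(A, B₂) ≤ c λ_i(A, B₁)`. It remains to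
compare the mass matrices in the Loewner order, and since assembly is monotone this can be done
element by element, where `M_e ⪯ M̄_e ⪯ (1 + α) M_e`. The upper bound is Bessel's inequality
`V_e V_eᵀ ⪯ M_e` for the `M_e`-orthonormal columns of `U_{e,2}`.
-/

section QuadraticForm

variable {m n o R : Type*} [Fintype m] [CommSemiring R]

lemma transpose_mul_mul_submatrix (W : Matrix m n R) (A : Matrix m m R) (f : o → n) :
    (W.submatrix id f)ᵀ * A * W.submatrix id f = (Wᵀ * A * W).submatrix f f :=
  rfl

variable [Fintype n]

lemma dotProduct_transpose_mul_mul_mulVec (W : Matrix m n R) (A : Matrix m m R) (y : n → R) :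
    y ⬝ᵥ ((Wᵀ * A * W) *ᵥ y) = (W *ᵥ y) ⬝ᵥ (A *ᵥ (W *ᵥ y)) := by
  rw [← mulVec_mulVec, ← mulVec_mulVec, dotProduct_mulVec y, vecMul_transpose]

lemma mulVec_injective_of_mul_eq_one [DecidableEq n] {V : Matrix n m R} {W : Matrix m n R}
    (h : V * W = 1) : Function.Injective W.mulVec :=
  Function.LeftInverse.injective (g := V.mulVec) fun y => by
    rw [mulVec_mulVec, h, one_mulVec]

end QuadraticForm

open scoped MatrixOrder

section Loewner

variable {m n : Type*}

lemma self_mul_transpose_nonneg [Finite m] [Fintype n] (V : Matrix m n ℝ) : 0 ≤ V * Vᵀ := by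
  rw [← conjTranspose_eq_transpose_of_trivial]
  exact (posSemidef_self_mul_conjTranspose V).nonneg

variable [Fintype m]

lemma dotProduct_mulVec_mono {A B : Matrix m m ℝ} (h : A ≤ B) (x : m → ℝ) :
    x ⬝ᵥ (A *ᵥ x) ≤ x ⬝ᵥ (B *ᵥ x) := by
  simpa only [star_trivial, sub_mulVec, dotProduct_sub, sub_nonneg] using
    (le_iff.1 h).dotProduct_mulVec_nonneg x

lemma transpose_mul_mul_mono [Finite n] {A B : Matrix m m ℝ} (h : A ≤ B) (L : Matrix m n ℝ) :
    Lᵀ * A * L ≤ Lᵀ * B * L := by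
  rw [le_iff, ← Matrix.sub_mul, ← Matrix.mul_sub, ← conjTranspose_eq_transpose_of_trivial]
  exact (le_iff.1 h).conjTranspose_mul_mul_same L

/- Bessel's inequality: with `V = M U` and `P = U Vᵀ`, the defect is
`M - V Vᵀ = (1 - P)ᵀ M (1 - P) + V (1 - Uᵀ M U) Vᵀ`. -/
lemma mul_mul_transpose_le_of_transpose_mul_mul_le_one [Fintype n] [DecidableEq n]
    {M : Matrix m m ℝ} {U : Matrix m n ℝ} (hM : 0 ≤ M) (hU : Uᵀ * M * U ≤ 1) :
    M * U * (M * U)ᵀ ≤ M := by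
  classical
  have hMt : Mᵀ = M := by
    simpa only [conjTranspose_eq_transpose_of_trivial] using hM.posSemidef.isHermitian.eq
  have residual_nonneg := transpose_mul_mul_mono hM (1 - U * (M * U)ᵀ)
  have contraction_nonneg := transpose_mul_mul_mono (sub_nonneg.2 hU) (M * U)ᵀ
  rw [Matrix.mul_zero, Matrix.zero_mul] at residual_nonneg contraction_nonneg
  rw [← sub_nonneg]
  convert add_nonneg residual_nonneg contraction_nonneg using 1
  simp only [transpose_sub, transpose_one, transpose_mul, transpose_transpose, hMt,
    Matrix.sub_mul, Matrix.mul_sub, Matrix.one_mul, Matrix.mul_one, Matrix.mul_assoc]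
  abel

end Loewner

section GeneralizedEigenvalues

variable {n : ℕ} {A B : Matrix (Fin n) (Fin n) ℝ}

lemma exists_orthogonal_diagonalization_sortedEigs (hA : A.IsHermitian) :
    ∃ U : Matrix (Fin n) (Fin n) ℝ, Uᵀ * U = 1 ∧ Uᵀ * A * U = diagonal (sortedEigs A) := by
  set Q := (hA.eigenvectorUnitary : Matrix (Fin n) (Fin n) ℝ)
  have orthogonal : Qᵀ * 1 * Q = 1 := by
    simpa only [Matrix.mul_one, star_eq_conjTranspose, conjTranspose_eq_transpose_of_trivial]
      using Unitary.coe_star_mul_self hA.eigenvectorUnitary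
  have diagonalizes : Qᵀ * A * Q = diagonal hA.eigenvalues := by
    have h := hA.conjStarAlgAut_star_eigenvectorUnitary
    rw [Unitary.conjStarAlgAut_apply] at h
    simpa [star_eq_conjTranspose, conjTranspose_eq_transpose_of_trivial, Function.comp_def] using h
  refine ⟨Q.submatrix id (Tuple.sort hA.eigenvalues), ?_, ?_⟩
  · rw [← Matrix.mul_one (transpose _), transpose_mul_mul_submatrix, orthogonal,
      submatrix_one_equiv]
  · rw [transpose_mul_mul_submatrix, diagonalizes, submatrix_diagonal_equiv, sortedEigs,
      dif_pos hA]

lemma sortedEigs_monotone (A : Matrix (Fin n) (Fin n) ℝ) : Monotone (sortedEigs A) := by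
  unfold sortedEigs
  split_ifs with hA
  · exact Tuple.monotone_sort hA.eigenvalues
  · exact monotone_const

lemma genEigs_monotone (A B : Matrix (Fin n) (Fin n) ℝ) : Monotone (genEigs A B) := by
  unfold genEigs
  split_ifs
  · exact sortedEigs_monotone _
  · exact monotone_const

lemma exists_simultaneous_diagonalization_genEigs (hA : A.IsHermitian) (hB : B.PosDef) :
    ∃ W : Matrix (Fin n) (Fin n) ℝ, Wᵀ * B * W = 1 ∧ Wᵀ * A * W = diagonal (genEigs A B) := by
  set S := CFC.sqrt B with hS
  have hSt : (S⁻¹)ᵀ = S⁻¹ := by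
    simpa only [conjTranspose_eq_transpose_of_trivial] using
      (CFC.sqrt_nonneg B).posSemidef.isHermitian.inv.eq
  have hSdet : IsUnit S.det :=
    (isUnit_iff_isUnit_det S).1 ((CFC.isUnit_sqrt_iff B hB.posSemidef.nonneg).2 hB.isUnit)
  have whitening : S⁻¹ * B * S⁻¹ = 1 := by
    rw [← CFC.sqrt_mul_sqrt_self B hB.posSemidef.nonneg, ← hS,
      nonsing_inv_mul_cancel_left _ _ hSdet, mul_nonsing_inv _ hSdet]
  have whitened_hermitian : (S⁻¹ * A * S⁻¹).IsHermitian := by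
    simpa only [conjTranspose_eq_transpose_of_trivial, hSt] using
      isHermitian_conjTranspose_mul_mul S⁻¹ hA
  obtain ⟨U, hU, hUA⟩ := exists_orthogonal_diagonalization_sortedEigs whitened_hermitian
  have congruence (X : Matrix (Fin n) (Fin n) ℝ) :
      (S⁻¹ * U)ᵀ * X * (S⁻¹ * U) = Uᵀ * (S⁻¹ * X * S⁻¹) * U := by
    rw [transpose_mul, hSt]
    simp only [Matrix.mul_assoc]
  refine ⟨S⁻¹ * U, ?_, ?_⟩
  · rw [congruence, whitening, Matrix.mul_one, hU]
  · rw [congruence, hUA, genEigs, dif_pos hB]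

lemma genEigs_nonneg (hA : A.PosSemidef) (hB : B.PosDef) (i : Fin n) : 0 ≤ genEigs A B i := by
  obtain ⟨W, -, hWA⟩ := exists_simultaneous_diagonalization_genEigs hA.isHermitian hB
  have h := hA.conjTranspose_mul_mul_same W
  rw [conjTranspose_eq_transpose_of_trivial, hWA] at h
  exact posSemidef_diagonal_iff.1 h i

lemma exists_submodule_dotProduct_eq_sum_genEigs (hA : A.IsHermitian) (hB : B.PosDef)
    (s : Finset (Fin n)) :
    ∃ S : Submodule ℝ (Fin n → ℝ), Module.finrank ℝ S = s.card ∧ ∀ x ∈ S, ∃ y : s → ℝ,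
      x ⬝ᵥ (B *ᵥ x) = ∑ j, y j ^ 2 ∧ x ⬝ᵥ (A *ᵥ x) = ∑ j : s, genEigs A B j * y j ^ 2 := by
  obtain ⟨W, hWB, hWA⟩ := exists_simultaneous_diagonalization_genEigs hA hB
  set V := W.submatrix id ((↑) : s → Fin n)
  have hVB : Vᵀ * B * V = 1 := by
    rw [transpose_mul_mul_submatrix, hWB, submatrix_one _ Subtype.val_injective]
  have hVA : Vᵀ * A * V = diagonal fun j : s => genEigs A B j := by
    rw [transpose_mul_mul_submatrix, hWA, submatrix_diagonal _ _ Subtype.val_injective,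
      Function.comp_def]
  refine ⟨LinearMap.range V.mulVecLin, ?_, ?_⟩
  · rw [LinearMap.finrank_range_of_inj (mulVec_injective_of_mul_eq_one hVB),
      Module.finrank_fintype_fun_eq_card, Fintype.card_coe]
  · rintro _ ⟨y, rfl⟩
    refine ⟨y, ?_, ?_⟩
    · rw [mulVecLin_apply, ← dotProduct_transpose_mul_mul_mulVec, hVB, one_mulVec]
      simp only [dotProduct, sq]
    · rw [mulVecLin_apply, ← dotProduct_transpose_mul_mul_mulVec, hVA]
      simp only [dotProduct, mulVec_diagonal, sq, mul_left_comm]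

lemma exists_submodule_le_genEigs_mul (hA : A.IsHermitian) (hB : B.PosDef) (i : Fin n) :
    ∃ S : Submodule ℝ (Fin n → ℝ), Module.finrank ℝ S = i + 1 ∧
      ∀ x ∈ S, x ⬝ᵥ (A *ᵥ x) ≤ genEigs A B i * (x ⬝ᵥ (B *ᵥ x)) := by
  obtain ⟨S, hS, hS_sum⟩ := exists_submodule_dotProduct_eq_sum_genEigs hA hB (Finset.Iic i)
  refine ⟨S, by rw [hS, Fin.card_Iic], fun x hx => ?_⟩
  obtain ⟨y, hxB, hxA⟩ := hS_sum x hx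
  rw [hxA, hxB, Finset.mul_sum]
  gcongr with j
  exact genEigs_monotone A B (Finset.mem_Iic.1 j.2)

lemma exists_submodule_genEigs_mul_le (hA : A.IsHermitian) (hB : B.PosDef) (i : Fin n) :
    ∃ S : Submodule ℝ (Fin n → ℝ), Module.finrank ℝ S = n - i ∧
      ∀ x ∈ S, genEigs A B i * (x ⬝ᵥ (B *ᵥ x)) ≤ x ⬝ᵥ (A *ᵥ x) := by
  obtain ⟨S, hS, hS_sum⟩ := exists_submodule_dotProduct_eq_sum_genEigs hA hB (Finset.Ici i)
  refine ⟨S, by rw [hS, Fin.card_Ici], fun x hx => ?_⟩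
  obtain ⟨y, hxB, hxA⟩ := hS_sum x hx
  rw [hxA, hxB, Finset.mul_sum]
  gcongr with j
  exact genEigs_monotone A B (Finset.mem_Ici.1 j.2)

/-- The Courant-Fischer min-max principle; indices start at `0`, whence the dimension `i + 1`. -/
theorem genEigs_le_iff_exists_submodule (hA : A.IsHermitian) (hB : B.PosDef) (i : Fin n) (t : ℝ) :
    genEigs A B i ≤ t ↔ ∃ S : Submodule ℝ (Fin n → ℝ), Module.finrank ℝ S = i + 1 ∧
      ∀ x ∈ S, x ⬝ᵥ (A *ᵥ x) ≤ t * (x ⬝ᵥ (B *ᵥ x)) := by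
  constructor
  · intro ht
    obtain ⟨S, hS, hS_le⟩ := exists_submodule_le_genEigs_mul hA hB i
    refine ⟨S, hS, fun x hx => (hS_le x hx).trans ?_⟩
    have : 0 ≤ x ⬝ᵥ (B *ᵥ x) := hB.posSemidef.dotProduct_mulVec_nonneg x
    gcongr
  · rintro ⟨S, hS, hS_le⟩
    obtain ⟨T, hT, hT_ge⟩ := exists_submodule_genEigs_mul_le hA hB i
    have not_disjoint : ¬ Disjoint S T := fun hdisj => by
      have := Submodule.finrank_add_finrank_le_of_disjoint hdisj
      rw [hS, hT, Module.finrank_fin_fun] at this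
      lia
    obtain ⟨x, hx, hx0⟩ :=
      Submodule.exists_mem_ne_zero_of_ne_bot (mt disjoint_iff.2 not_disjoint)
    have hxB : 0 < x ⬝ᵥ (B *ᵥ x) := hB.dotProduct_mulVec_pos hx0
    exact le_of_mul_le_mul_right ((hT_ge x hx.2).trans (hS_le x hx.1)) hxB

theorem genEigs_le_mul_genEigs_of_le_smul {B₁ B₂ : Matrix (Fin n) (Fin n) ℝ} {c : ℝ}
    (hA : A.PosSemidef) (hB₁ : B₁.PosDef) (hB₂ : B₂.PosDef) (h : B₁ ≤ c • B₂) (i : Fin n) :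
    genEigs A B₂ i ≤ c * genEigs A B₁ i := by
  obtain ⟨S, hS, hS_le⟩ := exists_submodule_le_genEigs_mul hA.isHermitian hB₁ i
  refine (genEigs_le_iff_exists_submodule hA.isHermitian hB₂ i _).2 ⟨S, hS, fun x hx => ?_⟩
  calc x ⬝ᵥ (A *ᵥ x) ≤ genEigs A B₁ i * (x ⬝ᵥ (B₁ *ᵥ x)) := hS_le x hx
    _ ≤ genEigs A B₁ i * (x ⬝ᵥ ((c • B₂) *ᵥ x)) :=
      mul_le_mul_of_nonneg_left (dotProduct_mulVec_mono h x) (genEigs_nonneg hA hB₁ i)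
    _ = c * genEigs A B₁ i * (x ⬝ᵥ (B₂ *ᵥ x)) := by
      rw [smul_mulVec, dotProduct_smul, smul_eq_mul]
      ring

end GeneralizedEigenvalues

section Assembly

variable {E n : Type*} {ι : E → Type*} [Fintype E] [∀ e, Fintype (ι e)]

/-- The assembled matrix `Σ_e L_eᵀ A_e L_e`. The elements `e` may have different numbers of degrees
of freedom, and the connectivity matrices `L_e` are arbitrary. -/
def assembly (L : ∀ e, Matrix (ι e) n ℝ) (A : ∀ e, Matrix (ι e) (ι e) ℝ) : Matrix n n ℝ :=
  ∑ e, (L e)ᵀ * A e * L e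

lemma assembly_smul (L : ∀ e, Matrix (ι e) n ℝ) (c : ℝ) (A : ∀ e, Matrix (ι e) (ι e) ℝ) :
    assembly L (fun e => c • A e) = c • assembly L A := by
  simp only [assembly, Matrix.mul_smul, Matrix.smul_mul, Finset.smul_sum]

lemma assembly_mono [Finite n] (L : ∀ e, Matrix (ι e) n ℝ) {A B : ∀ e, Matrix (ι e) (ι e) ℝ}
    (h : ∀ e, A e ≤ B e) : assembly L A ≤ assembly L B :=
  Finset.sum_le_sum fun e _ => transpose_mul_mul_mono (h e) (L e)

lemma assembly_posSemidef [Finite n] (L : ∀ e, Matrix (ι e) n ℝ) {A : ∀ e, Matrix (ι e) (ι e) ℝ}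
    (hA : ∀ e, (A e).PosSemidef) : (assembly L A).PosSemidef :=
  posSemidef_sum _ fun e _ => by
    rw [← conjTranspose_eq_transpose_of_trivial]
    exact (hA e).conjTranspose_mul_mul_same (L e)

variable [Fintype n]

lemma dotProduct_assembly_mulVec (L : ∀ e, Matrix (ι e) n ℝ) (A : ∀ e, Matrix (ι e) (ι e) ℝ)
    (x : n → ℝ) :
    x ⬝ᵥ (assembly L A *ᵥ x) = ∑ e, (L e *ᵥ x) ⬝ᵥ (A e *ᵥ (L e *ᵥ x)) := by
  simp only [assembly, sum_mulVec, dotProduct_sum, dotProduct_transpose_mul_mul_mulVec]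

lemma assembly_posDef {L : ∀ e, Matrix (ι e) n ℝ} {A : ∀ e, Matrix (ι e) (ι e) ℝ}
    (hL : ∀ x, (∀ e, L e *ᵥ x = 0) → x = 0) (hA : ∀ e, (A e).PosDef) :
    (assembly L A).PosDef := by
  refine .of_dotProduct_mulVec_pos
    (assembly_posSemidef L fun e => (hA e).posSemidef).isHermitian fun x hx => ?_
  obtain ⟨e, he⟩ : ∃ e, L e *ᵥ x ≠ 0 := not_forall.1 (mt (hL x) hx)
  rw [star_trivial, dotProduct_assembly_mulVec]
  exact Finset.sum_pos' (fun e _ => (hA e).posSemidef.dotProduct_mulVec_nonneg (L e *ᵥ x))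
    ⟨e, Finset.mem_univ e, (hA e).dotProduct_mulVec_pos he⟩

end Assembly

lemma elemL_mulVec {ι : Type*} {n : ℕ} (σ : ι → Fin n) (x : Fin n → ℝ) :
    elemL σ *ᵥ x = x ∘ σ := by
  ext j
  simp [elemL, mulVec, dotProduct]

lemma eq_zero_of_forall_elemL_mulVec_eq_zero {E : Type*} {ι : E → Type*} {n : ℕ}
    {σ : ∀ e, ι e → Fin n} (hcover : ∀ i, ∃ e j, σ e j = i) (x : Fin n → ℝ)
    (hx : ∀ e, elemL (σ e) *ᵥ x = 0) : x = 0 := by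
  ext i
  obtain ⟨e, j, rfl⟩ := hcover i
  simpa only [elemL_mulVec, Function.comp_apply, Pi.zero_apply] using congrFun (hx e) j

section Deflation

variable {m r : Type*} [Fintype m] [Fintype r] {α : ℝ} {M : Matrix m m ℝ}

/-- The deflated element mass matrix `M̄ = M + α V Vᵀ` with `V = M U`, which for `M`-orthonormal
columns of `U` scales the mass of the modes in `U` by `1 + α`. -/
def deflate (α : ℝ) (M : Matrix m m ℝ) (U : Matrix m r ℝ) : Matrix m m ℝ :=
  M + α • (M * U * (M * U)ᵀ)

lemma le_deflate (hα : 0 ≤ α) (M : Matrix m m ℝ) (U : Matrix m r ℝ) : M ≤ deflate α M U :=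
  le_add_of_nonneg_right (smul_nonneg hα (self_mul_transpose_nonneg (M * U)))

lemma deflate_le_smul [DecidableEq r] {U : Matrix m r ℝ} (hα : 0 ≤ α) (hM : 0 ≤ M)
    (hU : Uᵀ * M * U ≤ 1) : deflate α M U ≤ (1 + α) • M := by
  rw [deflate, add_smul, one_smul]
  gcongr
  exact mul_mul_transpose_le_of_transpose_mul_mul_le_one hM hU

lemma deflate_posDef (hα : 0 ≤ α) (hM : M.PosDef) (U : Matrix m r ℝ) :
    (deflate α M U).PosDef :=
  hM.add_posSemidef ((self_mul_transpose_nonneg (M * U)).posSemidef.smul hα)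

end Deflation

lemma sqrt_div_sqrt_mem_Icc {a b c : ℝ} (hb : 0 < b) (hba : b ≤ a) (hac : a ≤ c * b) :
    √a / √b ∈ Set.Icc 1 √c := by
  rw [← Real.sqrt_div' a hb.le]
  exact ⟨Real.one_le_sqrt.2 ((one_le_div hb).2 hba), Real.sqrt_le_sqrt ((div_le_iff₀ hb).2 hac)⟩

theorem local_deflation_cutoff_bounds_general {E : Type*} {ι κ : E → Type*} {n : ℕ} [Fintype E]
    [∀ e, Fintype (ι e)] [∀ e, Fintype (κ e)] [∀ e, DecidableEq (κ e)]
    {α : ℝ} (hα : 0 ≤ α) {L : ∀ e, Matrix (ι e) (Fin n) ℝ}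
    (hL : ∀ x, (∀ e, L e *ᵥ x = 0) → x = 0) {Ke Me : ∀ e, Matrix (ι e) (ι e) ℝ}
    (hKe : ∀ e, (Ke e).PosSemidef) (hMe : ∀ e, (Me e).PosDef) {U : ∀ e, Matrix (ι e) (κ e) ℝ}
    (hU : ∀ e, (U e)ᵀ * Me e * U e ≤ 1) {K M Mbar : Matrix (Fin n) (Fin n) ℝ}
    (hK : K = assembly L Ke) (hM : M = assembly L Me)
    (hMbar : Mbar = assembly L fun e => deflate α (Me e) (U e)) (i : Fin n) :
    (genEigs K Mbar i ≤ genEigs K M i ∧ genEigs K M i ≤ (1 + α) * genEigs K Mbar i) ∧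
    (0 < genEigs K Mbar i →
      1 ≤ √(genEigs K M i) / √(genEigs K Mbar i) ∧
      √(genEigs K M i) / √(genEigs K Mbar i) ≤ √(1 + α)) := by
  have K_psd : K.PosSemidef := hK ▸ assembly_posSemidef L hKe
  have M_pd : M.PosDef := hM ▸ assembly_posDef hL hMe
  have Mbar_pd : Mbar.PosDef :=
    hMbar ▸ assembly_posDef hL fun e => deflate_posDef hα (hMe e) (U e)
  have M_le : M ≤ (1 : ℝ) • Mbar := by
    rw [one_smul, hM, hMbar]
    exact assembly_mono L fun e => le_deflate hα (Me e) (U e)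
  have Mbar_le : Mbar ≤ (1 + α) • M := by
    rw [hM, hMbar, ← assembly_smul]
    exact assembly_mono L fun e => deflate_le_smul hα (hMe e).posSemidef.nonneg (hU e)
  have lower : genEigs K Mbar i ≤ genEigs K M i := by
    simpa only [one_mul] using genEigs_le_mul_genEigs_of_le_smul K_psd M_pd Mbar_pd M_le i
  have upper := genEigs_le_mul_genEigs_of_le_smul K_psd Mbar_pd M_pd Mbar_le i
  exact ⟨⟨lower, upper⟩, fun hpos => sqrt_div_sqrt_mem_Icc hpos lower upper⟩

/-- **Local deflation with a uniform cutoff `α > 0`.**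
Let `K = Σ_e L_eᵀ·K_e·L_e` with `K_e ⪰ 0` symmetric and `M = Σ_e L_eᵀ·M_e·L_e` with `M_e ≻ 0`
symmetric. For each `e`, let `U_{e,2} ∈ ℝ^{m×r}` (`0 < r < m`) be `M_e`-orthonormal
(`U_{e,2}ᵀ·M_e·U_{e,2} = I_r`), set `V_e = M_e·U_{e,2}`, `M̄_e = M_e + α·V_e·V_eᵀ` and
`M̄ = Σ_e L_eᵀ·M̄_e·L_e`. Then for every `i`:
`λ_i(K,M̄) ≤ λ_i(K,M) ≤ (1+α)·λ_i(K,M̄)`; equivalently `1 ≤ ω_i/ω̄_i ≤ √(1+α)`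
wherever `ω̄_i > 0`. -/
theorem local_deflation_cutoff_bounds {N m n pmax r : ℕ} (hpmax : 0 < pmax)
    (hr : 0 < r) (hrm : r < m + 1)
    (α : ℝ) (hα : 0 < α)
    (σ : Fin (N+1) → Fin (m+1) → Fin (n+1))
    (hinj : ∀ e, Function.Injective (σ e))
    (hcover : ∀ i : Fin (n+1), ∃ e j, σ e j = i)
    (hp : ∀ i : Fin (n+1), (Finset.univ.filter fun e => ∃ j, σ e j = i).card ≤ pmax)
    (Ke Me : Fin (N+1) → Matrix (Fin (m+1)) (Fin (m+1)) ℝ)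
    (hKe : ∀ e, (Ke e).PosSemidef) (hMe : ∀ e, (Me e).PosDef)
    (U2 : Fin (N+1) → Matrix (Fin (m+1)) (Fin r) ℝ)
    (hU2 : ∀ e, (U2 e)ᵀ * Me e * U2 e = 1)
    (Ve : Fin (N+1) → Matrix (Fin (m+1)) (Fin r) ℝ)
    (hVe : ∀ e, Ve e = Me e * U2 e)
    (Mbare : Fin (N+1) → Matrix (Fin (m+1)) (Fin (m+1)) ℝ)
    (hMbare : ∀ e, Mbare e = Me e + α • (Ve e * (Ve e)ᵀ))
    (K M Mbar : Matrix (Fin (n+1)) (Fin (n+1)) ℝ)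
    (hK : K = ∑ e, (elemL (σ e))ᵀ * Ke e * elemL (σ e))
    (hM : M = ∑ e, (elemL (σ e))ᵀ * Me e * elemL (σ e))
    (hMbar : Mbar = ∑ e, (elemL (σ e))ᵀ * Mbare e * elemL (σ e)) :
    ∀ i : Fin (n+1),
      (genEigs K Mbar i ≤ genEigs K M i ∧ genEigs K M i ≤ (1 + α) * genEigs K Mbar i) ∧
      (0 < genEigs K Mbar i →
        1 ≤ Real.sqrt (genEigs K M i) / Real.sqrt (genEigs K Mbar i) ∧
        Real.sqrt (genEigs K M i) / Real.sqrt (genEigs K Mbar i) ≤ Real.sqrt (1 + α)) := by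
  obtain rfl : Ve = fun e => Me e * U2 e := funext hVe
  obtain rfl : Mbare = fun e => deflate α (Me e) (U2 e) := funext hMbare
  exact local_deflation_cutoff_bounds_general hα.le (eq_zero_of_forall_elemL_mulVec_eq_zero hcover)
    hKe hMe (fun e => (hU2 e).le) hK hM hMbar
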